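/- arXiv:alg-geom/9612008 — 3 statements merged into one kernel-verified Lean document; each statement's English description precedes it below -/
import Mathlib

section
/- Existence of S¹-invariant configurations, SU case: for every k ≥ 1 there exist b₀ ∈ M_{k×2k}(ℂ) and c₀ ∈ M_{2k×k}(ℂ) such that b₀c₀ = 0, c₀ is injective, b₀ is surjective, and the S⁴-configuration (0, 0, b₀, c₀) (with a₁ = a₂ = 0, n = 2k) is integrable and nondegenerate. -/
open Matrix

/-- The monad map `A(x)` of an `S⁴`-configuration `(a₁, a₂, b, c)`, with the `ℂⁿ` factor
indexed by an arbitrary finite type `N`. -/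
noncomputable def monadA {k : ℕ} {N : Type} [Fintype N]
    (a₁ a₂ : Matrix (Fin k) (Fin k) ℂ) (c : Matrix N (Fin k) ℂ) (x : ℂ × ℂ × ℂ) :
    Matrix ((Fin k ⊕ Fin k) ⊕ N) (Fin k) ℂ :=
  Matrix.fromRows
    (Matrix.fromRows (x.1 • (1 : Matrix (Fin k) (Fin k) ℂ) - x.2.2 • a₁)
      (x.2.1 • (1 : Matrix (Fin k) (Fin k) ℂ) - x.2.2 • a₂))
    (x.2.2 • c)

/-- The monad map `B(x)` of an `S⁴`-configuration `(a₁, a₂, b, c)`, with the `ℂⁿ` factor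
indexed by an arbitrary finite type `N`. -/
noncomputable def monadB {k : ℕ} {N : Type} [Fintype N]
    (a₁ a₂ : Matrix (Fin k) (Fin k) ℂ) (b : Matrix (Fin k) N ℂ) (x : ℂ × ℂ × ℂ) :
    Matrix (Fin k) ((Fin k ⊕ Fin k) ⊕ N) ℂ :=
  Matrix.fromCols
    (Matrix.fromCols (-(x.2.1 • (1 : Matrix (Fin k) (Fin k) ℂ)) + x.2.2 • a₂)
      (x.1 • (1 : Matrix (Fin k) (Fin k) ℂ) - x.2.2 • a₁))
    (x.2.2 • b)

/-! If `c` is injective and `b` is surjective, then `(a₁, a₂, b, c)` is nondegenerate whatever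
`a₁` and `a₂` are: the block `x₃c` (resp. `x₃b`) settles the points with `x₃ ≠ 0`, and for `x₃ = 0`
the matrices `a₁`, `a₂` disappear, leaving the scalar blocks `x₁` and `±x₂`. Integrability for
commuting `a₁`, `a₂` is `bc = 0`, so it suffices to let `c` include `ℂᵏ` in `ℂⁿ` as a coordinate
subspace and `b` project `ℂⁿ` onto `k` other coordinates, which is possible when `n ≥ 2k`. -/

/-- The nondegeneracy condition on an `S⁴`-configuration `(a₁, a₂, b, c)`: the monad maps `A(x)`
and `B(x)` are injective and surjective, respectively, for every `x ≠ 0`. -/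
def IsNondegenerate {k : ℕ} {N : Type} [Fintype N] (a₁ a₂ : Matrix (Fin k) (Fin k) ℂ)
    (b : Matrix (Fin k) N ℂ) (c : Matrix N (Fin k) ℂ) : Prop :=
  ∀ x : ℂ × ℂ × ℂ, x ≠ 0 →
    Function.Injective (monadA a₁ a₂ c x).mulVec ∧ Function.Surjective (monadB a₁ a₂ b x).mulVec

section Matrix

variable {R m m₁ m₂ n n₁ n₂ : Type*} [Semiring R]

theorem mulVec_injective_of_mul_eq_one [Fintype m] [Fintype n] [DecidableEq n]
    {A : Matrix m n R} {L : Matrix n m R} (h : L * A = 1) : Function.Injective A.mulVec :=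
  Function.LeftInverse.injective (g := L.mulVec) fun v => by rw [mulVec_mulVec, h, one_mulVec]

theorem mulVec_injective_smul [Fintype n] {A : Matrix m n R} {r : R} (hr : IsUnit r)
    (hA : Function.Injective A.mulVec) : Function.Injective (r • A).mulVec := by
  intro v w h
  rw [smul_mulVec, smul_mulVec, hr.smul_left_cancel] at h
  exact hA h

theorem mulVec_surjective_smul [Fintype n] {A : Matrix m n R} {r : R} (hr : IsUnit r)
    (hA : Function.Surjective A.mulVec) : Function.Surjective (r • A).mulVec := by
  intro w
  obtain ⟨u, rfl⟩ := hr
  obtain ⟨v, hv⟩ := hA ((↑u⁻¹ : R) • w)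
  exact ⟨v, by rw [smul_mulVec, hv, smul_smul, u.mul_inv, one_smul]⟩

theorem mulVec_injective_fromRows_left [Fintype n] {A₁ : Matrix m₁ n R} (A₂ : Matrix m₂ n R)
    (h : Function.Injective A₁.mulVec) : Function.Injective (fromRows A₁ A₂).mulVec := by
  intro v w hvw
  rw [fromRows_mulVec, fromRows_mulVec, Sum.elim_eq_iff] at hvw
  exact h hvw.1

theorem mulVec_injective_fromRows_right [Fintype n] (A₁ : Matrix m₁ n R) {A₂ : Matrix m₂ n R}
    (h : Function.Injective A₂.mulVec) : Function.Injective (fromRows A₁ A₂).mulVec := by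
  intro v w hvw
  rw [fromRows_mulVec, fromRows_mulVec, Sum.elim_eq_iff] at hvw
  exact h hvw.2

theorem mulVec_surjective_fromCols_left [Fintype n₁] [Fintype n₂] {B₁ : Matrix m n₁ R}
    (B₂ : Matrix m n₂ R) (h : Function.Surjective B₁.mulVec) :
    Function.Surjective (fromCols B₁ B₂).mulVec := by
  intro w
  obtain ⟨v, rfl⟩ := h w
  exact ⟨Sum.elim v 0, by rw [fromCols_mulVec_sumElim, mulVec_zero, add_zero]⟩

theorem mulVec_surjective_fromCols_right [Fintype n₁] [Fintype n₂] (B₁ : Matrix m n₁ R)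
    {B₂ : Matrix m n₂ R} (h : Function.Surjective B₂.mulVec) :
    Function.Surjective (fromCols B₁ B₂).mulVec := by
  intro w
  obtain ⟨v, rfl⟩ := h w
  exact ⟨Sum.elim 0 v, by rw [fromCols_mulVec_sumElim, mulVec_zero, zero_add]⟩

theorem one_submatrix_mul_one_submatrix [Fintype n] [DecidableEq n] (g : m₁ → n) (f : m₂ → n) :
    (1 : Matrix n n R).submatrix g id * (1 : Matrix n n R).submatrix id f =
      (1 : Matrix n n R).submatrix g f := by
  rw [← submatrix_mul _ _ g id f Function.bijective_id, one_mul]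

theorem exists_mul_eq_zero_and_mulVec_injective_surjective [Fintype m] [Fintype n]
    {N : Type*} [Fintype N] (hN : Fintype.card m + Fintype.card n ≤ Fintype.card N) :
    ∃ (b : Matrix m N R) (c : Matrix N n R),
      b * c = 0 ∧ Function.Injective c.mulVec ∧ Function.Surjective b.mulVec := by
  classical
  obtain ⟨e⟩ : Nonempty (m ⊕ n ↪ N) :=
    Function.Embedding.nonempty_of_card_le (by rwa [Fintype.card_sum])
  let i : m ↪ N := Function.Embedding.inl.trans e
  let j : n ↪ N := Function.Embedding.inr.trans e
  have disjoint_range (s : m) (t : n) : i s ≠ j t := fun h => Sum.inl_ne_inr (e.injective h)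
  refine ⟨(1 : Matrix N N R).submatrix i id, (1 : Matrix N N R).submatrix id j, ?_, ?_, ?_⟩
  · rw [one_submatrix_mul_one_submatrix]
    ext s t
    exact one_apply_ne (disjoint_range s t)
  · apply mulVec_injective_of_mul_eq_one (L := (1 : Matrix N N R).submatrix j id)
    rw [one_submatrix_mul_one_submatrix, submatrix_one_embedding]
  · refine mulVec_surjective_iff_exists_right_inverse.mpr
      ⟨(1 : Matrix N N R).submatrix id i, ?_⟩
    rw [one_submatrix_mul_one_submatrix, submatrix_one_embedding]

end Matrix

section Monad

variable {k : ℕ} {N : Type} [Fintype N]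

theorem mulVec_injective_monadA (a₁ a₂ : Matrix (Fin k) (Fin k) ℂ) {c : Matrix N (Fin k) ℂ}
    (hc : Function.Injective c.mulVec) {x : ℂ × ℂ × ℂ} (hx : x ≠ 0) :
    Function.Injective (monadA a₁ a₂ c x).mulVec := by
  have injective_smul_one {r : ℂ} (hr : r ≠ 0) :
      Function.Injective (r • (1 : Matrix (Fin k) (Fin k) ℂ)).mulVec :=
    mulVec_injective_smul hr.isUnit (mulVec_injective_of_isUnit isUnit_one)
  obtain ⟨x₁, x₂, x₃⟩ := x
  by_cases h₃ : x₃ = 0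
  · subst h₃
    apply mulVec_injective_fromRows_left
    simp only [zero_smul, sub_zero]
    by_cases h₁ : x₁ = 0
    · have h₂ : x₂ ≠ 0 := fun h₂ => hx (by rw [h₁, h₂]; rfl)
      exact mulVec_injective_fromRows_right _ (injective_smul_one h₂)
    · exact mulVec_injective_fromRows_left _ (injective_smul_one h₁)
  · exact mulVec_injective_fromRows_right _ (mulVec_injective_smul (Ne.isUnit h₃) hc)

theorem mulVec_surjective_monadB (a₁ a₂ : Matrix (Fin k) (Fin k) ℂ) {b : Matrix (Fin k) N ℂ}
    (hb : Function.Surjective b.mulVec) {x : ℂ × ℂ × ℂ} (hx : x ≠ 0) :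
    Function.Surjective (monadB a₁ a₂ b x).mulVec := by
  have surjective_smul_one {r : ℂ} (hr : r ≠ 0) :
      Function.Surjective (r • (1 : Matrix (Fin k) (Fin k) ℂ)).mulVec :=
    mulVec_surjective_smul hr.isUnit (mulVec_surjective_iff_isUnit.mpr isUnit_one)
  obtain ⟨x₁, x₂, x₃⟩ := x
  by_cases h₃ : x₃ = 0
  · subst h₃
    apply mulVec_surjective_fromCols_left
    simp only [zero_smul, add_zero, sub_zero, ← neg_smul]
    by_cases h₁ : x₁ = 0
    · have h₂ : x₂ ≠ 0 := fun h₂ => hx (by rw [h₁, h₂]; rfl)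
      exact mulVec_surjective_fromCols_left _ (surjective_smul_one (neg_ne_zero.mpr h₂))
    · exact mulVec_surjective_fromCols_right _ (surjective_smul_one h₁)
  · exact mulVec_surjective_fromCols_right _ (mulVec_surjective_smul (Ne.isUnit h₃) hb)

theorem isNondegenerate_of_injective_of_surjective (a₁ a₂ : Matrix (Fin k) (Fin k) ℂ)
    {b : Matrix (Fin k) N ℂ} {c : Matrix N (Fin k) ℂ} (hc : Function.Injective c.mulVec)
    (hb : Function.Surjective b.mulVec) : IsNondegenerate a₁ a₂ b c :=
  fun _ hx => ⟨mulVec_injective_monadA a₁ a₂ hc hx, mulVec_surjective_monadB a₁ a₂ hb hx⟩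

theorem exists_S1_invariant_SU_configuration_general (hN : 2 * k ≤ Fintype.card N) :
    ∃ (b₀ : Matrix (Fin k) N ℂ) (c₀ : Matrix N (Fin k) ℂ),
      b₀ * c₀ = 0 ∧
      Function.Injective c₀.mulVec ∧
      Function.Surjective b₀.mulVec ∧
      ∀ a₁ a₂ : Matrix (Fin k) (Fin k) ℂ, Commute a₁ a₂ →
        a₁ * a₂ - a₂ * a₁ + b₀ * c₀ = 0 ∧ IsNondegenerate a₁ a₂ b₀ c₀ := by
  obtain ⟨b, c, hmul, hc, hb⟩ := exists_mul_eq_zero_and_mulVec_injective_surjective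
    (R := ℂ) (m := Fin k) (n := Fin k) (N := N) (by simpa [← two_mul] using hN)
  refine ⟨b, c, hmul, hc, hb, fun a₁ a₂ ha => ⟨?_, ?_⟩⟩
  · rw [ha.eq, sub_self, hmul, add_zero]
  · exact isNondegenerate_of_injective_of_surjective a₁ a₂ hc hb

end Monad

/-- Existence of `S¹`-invariant configurations, `SU` case: for every `k ≥ 1` there exist
`b₀ ∈ M_{k×2k}(ℂ)` and `c₀ ∈ M_{2k×k}(ℂ)` with `b₀c₀ = 0`, `c₀` injective, `b₀`
surjective, such that the `S⁴`-configuration `(0, 0, b₀, c₀)` (with `n = 2k`) is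
integrable and nondegenerate. -/
theorem exists_S1_invariant_SU_configuration {k : ℕ} (hk : 1 ≤ k) :
    ∃ (b₀ : Matrix (Fin k) (Fin (2 * k)) ℂ) (c₀ : Matrix (Fin (2 * k)) (Fin k) ℂ),
      b₀ * c₀ = 0 ∧
      Function.Injective c₀.mulVec ∧
      Function.Surjective b₀.mulVec ∧
      ((0 : Matrix (Fin k) (Fin k) ℂ) * 0 - 0 * 0 + b₀ * c₀ = 0) ∧
      (∀ x : ℂ × ℂ × ℂ, x ≠ 0 →
        Function.Injective (monadA (0 : Matrix (Fin k) (Fin k) ℂ) 0 c₀ x).mulVec ∧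
        Function.Surjective (monadB (0 : Matrix (Fin k) (Fin k) ℂ) 0 b₀ x).mulVec) := by
  obtain ⟨b₀, c₀, hmul, hc, hb, h⟩ :=
    exists_S1_invariant_SU_configuration_general (k := k) (N := Fin (2 * k)) (by simp)
  exact ⟨b₀, c₀, hmul, hc, hb, h 0 0 (Commute.zero_left 0)⟩
end

section
/- The stabilization homotopy stays inside the configuration space: let (a₁, a₂, b, c) be an integrable nondegenerate SU(n) S⁴-configuration of charge k, and let b₀ ∈ M_{k×2k}(ℂ), c₀ ∈ M_{2k×k}(ℂ) satisfy b₀c₀ = 0 with c₀ injective and b₀ surjective. Then for every t ∈ [0,1], the tuple H_t(a₁,a₂,b,c) = ((1−t)a₁, (1−t)a₂, (t·b₀ | (1−t)·b), (t·c₀ ; (1−t)·c)) is an integrable nondegenerate SU(2k+n) S⁴-configuration of charge k, where (t·b₀ | (1−t)·b) ∈ M_{k×(2k+n)}(ℂ) and (t·c₀ ; (1−t)·c) ∈ M_{(2k+n)×k}(ℂ) are formed by block concatenation. -/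
open Matrix

/-!
Scaling `a₁, a₂, b, c` by `s` replaces `x = (x₁, x₂, x₃)` by `(x₁, x₂, s x₃)` in the monad maps, and
adjoining the blocks `t • c₀` and `t • b₀` intersects the kernel of `A(x)` with that of `x₃ t • c₀`
and adds the range of `x₃ t • b₀` to that of `B(x)`. If `x ≠ 0` and `(s, t) ≠ 0`, then
`(x₁, x₂, s x₃)` or `x₃ t` is nonzero, so nondegeneracy follows from that of `(a₁, a₂, b, c)` or
from injectivity of `c₀` and surjectivity of `b₀`. The homotopy is the segment of the
points `(1 - t, t)`, which misses the origin.
-/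

/-- The integrability equation `[a₁, a₂] + bc = 0` of a configuration `(a₁, a₂, b, c)`, with
entries in any ring `R` and index types in place of the charge and the rank. -/
def IsIntegrableConfiguration {κ N R : Type*} [Fintype κ] [Fintype N] [NonUnitalNonAssocRing R]
    (a₁ a₂ : Matrix κ κ R) (b : Matrix κ N R) (c : Matrix N κ R) : Prop :=
  a₁ * a₂ - a₂ * a₁ + b * c = 0

/-- Nondegeneracy of an `S⁴`-configuration: off the origin of `ℂ³` the monad map `A(x)` is
injective and the monad map `B(x)` is surjective. -/
def IsNondegenerateConfiguration {k : ℕ} {N : Type} [Fintype N]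
    (a₁ a₂ : Matrix (Fin k) (Fin k) ℂ) (b : Matrix (Fin k) N ℂ) (c : Matrix N (Fin k) ℂ) : Prop :=
  ∀ x : ℂ × ℂ × ℂ, x ≠ 0 →
    Function.Injective (monadA a₁ a₂ c x).mulVec ∧ Function.Surjective (monadB a₁ a₂ b x).mulVec

section BlockMatrices

variable {m₁ m₂ n₁ n₂ m n R S : Type*}

lemma smul_fromRows [SMul S R] (r : S) (A : Matrix m₁ n R) (B : Matrix m₂ n R) :
    r • fromRows A B = fromRows (r • A) (r • B) := by
  ext (_ | _) _ <;> rfl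

lemma smul_fromCols [SMul S R] (r : S) (A : Matrix m n₁ R) (B : Matrix m n₂ R) :
    r • fromCols A B = fromCols (r • A) (r • B) := by
  ext _ (_ | _) <;> rfl

variable [CommSemiring R]

lemma mulVecLin_smul [Fintype n] (r : R) (A : Matrix m n R) :
    (r • A).mulVecLin = r • A.mulVecLin :=
  map_smul (mulVecBilin R R) r A

lemma ker_mulVecLin_fromRows [Fintype n] (A : Matrix m₁ n R) (B : Matrix m₂ n R) :
    LinearMap.ker (fromRows A B).mulVecLin =
      LinearMap.ker A.mulVecLin ⊓ LinearMap.ker B.mulVecLin := by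
  ext v
  simp only [LinearMap.mem_ker, Submodule.mem_inf, mulVecLin_apply, fromRows_mulVec,
    ← Sum.elim_zero_zero, Sum.elim_eq_iff]

lemma range_mulVecLin_fromCols [Fintype n₁] [Fintype n₂]
    (A : Matrix m n₁ R) (B : Matrix m n₂ R) :
    LinearMap.range (fromCols A B).mulVecLin =
      LinearMap.range A.mulVecLin ⊔ LinearMap.range B.mulVecLin := by
  ext y
  simp only [Submodule.mem_sup, LinearMap.mem_range, mulVecLin_apply, fromCols_mulVec,
    exists_exists_eq_and]
  exact ⟨fun ⟨v, hv⟩ ↦ ⟨_, _, hv⟩, fun ⟨v, w, h⟩ ↦ ⟨Sum.elim v w, h⟩⟩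

end BlockMatrices

lemma IsIntegrableConfiguration.stabilize {κ M N R : Type*} [Fintype κ] [Fintype M] [Fintype N]
    [CommRing R] {a₁ a₂ : Matrix κ κ R} {b : Matrix κ N R} {c : Matrix N κ R}
    {b₀ : Matrix κ M R} {c₀ : Matrix M κ R} (h : IsIntegrableConfiguration a₁ a₂ b c)
    (h₀ : b₀ * c₀ = 0) (s t : R) :
    IsIntegrableConfiguration (s • a₁) (s • a₂)
      (fromCols (t • b₀) (s • b)) (fromRows (t • c₀) (s • c)) := by
  unfold IsIntegrableConfiguration at h ⊢
  simp only [fromCols_mul_fromRows, Matrix.smul_mul, Matrix.mul_smul, h₀, smul_zero, zero_add,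
    ← smul_sub, ← smul_add, h]

section Monad

variable {k : ℕ} {M N : Type} [Fintype M] [Fintype N] (a₁ a₂ : Matrix (Fin k) (Fin k) ℂ)

lemma monadA_smul (c : Matrix N (Fin k) ℂ) (s : ℂ) (x : ℂ × ℂ × ℂ) :
    monadA (s • a₁) (s • a₂) (s • c) x = monadA a₁ a₂ c (x.1, x.2.1, x.2.2 * s) := by
  simp only [monadA, smul_smul]

lemma monadB_smul (b : Matrix (Fin k) N ℂ) (s : ℂ) (x : ℂ × ℂ × ℂ) :
    monadB (s • a₁) (s • a₂) (s • b) x = monadB a₁ a₂ b (x.1, x.2.1, x.2.2 * s) := by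
  simp only [monadB, smul_smul]

lemma ker_monadA_fromRows (c₀ : Matrix M (Fin k) ℂ) (c : Matrix N (Fin k) ℂ) (x : ℂ × ℂ × ℂ) :
    LinearMap.ker (monadA a₁ a₂ (fromRows c₀ c) x).mulVecLin =
      LinearMap.ker (x.2.2 • c₀).mulVecLin ⊓ LinearMap.ker (monadA a₁ a₂ c x).mulVecLin := by
  simp only [monadA, smul_fromRows, ker_mulVecLin_fromRows]
  exact inf_left_comm _ _ _

lemma range_monadB_fromCols (b₀ : Matrix (Fin k) M ℂ) (b : Matrix (Fin k) N ℂ) (x : ℂ × ℂ × ℂ) :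
    LinearMap.range (monadB a₁ a₂ (fromCols b₀ b) x).mulVecLin =
      LinearMap.range (x.2.2 • b₀).mulVecLin ⊔ LinearMap.range (monadB a₁ a₂ b x).mulVecLin := by
  simp only [monadB, smul_fromCols, range_mulVecLin_fromCols]
  exact sup_left_comm _ _ _

end Monad

lemma mul_ne_zero_or_rescale_ne_zero {R : Type*} [MulZeroClass R] [NoZeroDivisors R] {s t : R}
    (hst : s ≠ 0 ∨ t ≠ 0) {x : R × R × R} (hx : x ≠ 0) :
    x.2.2 * t ≠ 0 ∨ (x.1, x.2.1, x.2.2 * s) ≠ 0 := by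
  obtain ⟨x₁, x₂, x₃⟩ := x
  simp only [ne_eq, Prod.mk_eq_zero, mul_eq_zero] at hx ⊢
  tauto

lemma isNondegenerateConfiguration_iff_ker_range {k : ℕ} {N : Type} [Fintype N]
    {a₁ a₂ : Matrix (Fin k) (Fin k) ℂ} {b : Matrix (Fin k) N ℂ} {c : Matrix N (Fin k) ℂ} :
    IsNondegenerateConfiguration a₁ a₂ b c ↔ ∀ x : ℂ × ℂ × ℂ, x ≠ 0 →
      LinearMap.ker (monadA a₁ a₂ c x).mulVecLin = ⊥ ∧
        LinearMap.range (monadB a₁ a₂ b x).mulVecLin = ⊤ := by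
  simp only [IsNondegenerateConfiguration, LinearMap.ker_eq_bot, LinearMap.range_eq_top,
    coe_mulVecLin]

lemma IsNondegenerateConfiguration.stabilize {k : ℕ} {M N : Type} [Fintype M] [Fintype N]
    {a₁ a₂ : Matrix (Fin k) (Fin k) ℂ} {b : Matrix (Fin k) N ℂ} {c : Matrix N (Fin k) ℂ}
    {b₀ : Matrix (Fin k) M ℂ} {c₀ : Matrix M (Fin k) ℂ}
    (h : IsNondegenerateConfiguration a₁ a₂ b c) (hc₀ : Function.Injective c₀.mulVec)
    (hb₀ : Function.Surjective b₀.mulVec) {s t : ℂ} (hst : s ≠ 0 ∨ t ≠ 0) :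
    IsNondegenerateConfiguration (s • a₁) (s • a₂)
      (fromCols (t • b₀) (s • b)) (fromRows (t • c₀) (s • c)) := by
  rw [← coe_mulVecLin, ← LinearMap.ker_eq_bot] at hc₀
  rw [← coe_mulVecLin, ← LinearMap.range_eq_top] at hb₀
  rw [isNondegenerateConfiguration_iff_ker_range] at h ⊢
  intro x hx
  rw [ker_monadA_fromRows, range_monadB_fromCols, monadA_smul, monadB_smul, smul_smul, smul_smul]
  obtain hxt | hxs := mul_ne_zero_or_rescale_ne_zero hst hx
  · rw [mulVecLin_smul, mulVecLin_smul, LinearMap.ker_smul _ _ hxt, LinearMap.range_smul _ _ hxt,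
      hc₀, hb₀]
    exact ⟨bot_inf_eq _, top_sup_eq _⟩
  · obtain ⟨hA, hB⟩ := h _ hxs
    rw [hA, hB]
    exact ⟨inf_bot_eq _, sup_top_eq _⟩

theorem stabilization_homotopy_stays_in_configurations_general {k : ℕ} {M N : Type}
    [Fintype M] [Fintype N] {a₁ a₂ : Matrix (Fin k) (Fin k) ℂ}
    {b : Matrix (Fin k) N ℂ} {c : Matrix N (Fin k) ℂ}
    {b₀ : Matrix (Fin k) M ℂ} {c₀ : Matrix M (Fin k) ℂ}
    (hint : IsIntegrableConfiguration a₁ a₂ b c) (hnd : IsNondegenerateConfiguration a₁ a₂ b c)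
    (hb₀c₀ : b₀ * c₀ = 0) (hc₀ : Function.Injective c₀.mulVec)
    (hb₀ : Function.Surjective b₀.mulVec) {s t : ℂ} (hst : s ≠ 0 ∨ t ≠ 0) :
    IsIntegrableConfiguration (s • a₁) (s • a₂)
        (fromCols (t • b₀) (s • b)) (fromRows (t • c₀) (s • c)) ∧
      IsNondegenerateConfiguration (s • a₁) (s • a₂)
        (fromCols (t • b₀) (s • b)) (fromRows (t • c₀) (s • c)) :=
  ⟨hint.stabilize hb₀c₀ s t, hnd.stabilize hc₀ hb₀ hst⟩

/-- The stabilization homotopy stays inside the configuration space: if `(a₁,a₂,b,c)` is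
an integrable nondegenerate `SU(n)` `S⁴`-configuration of charge `k`, and `b₀c₀ = 0` with
`c₀` injective and `b₀` surjective, then for every `t ∈ [0,1]` the tuple
`H_t(a₁,a₂,b,c) = ((1−t)a₁, (1−t)a₂, (t·b₀ | (1−t)·b), (t·c₀ ; (1−t)·c))` is an
integrable nondegenerate `SU(2k+n)` `S⁴`-configuration of charge `k`. -/
theorem stabilization_homotopy_stays_in_configurations {k n : ℕ}
    (a₁ a₂ : Matrix (Fin k) (Fin k) ℂ)
    (b : Matrix (Fin k) (Fin n) ℂ) (c : Matrix (Fin n) (Fin k) ℂ)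
    (b₀ : Matrix (Fin k) (Fin (2 * k)) ℂ) (c₀ : Matrix (Fin (2 * k)) (Fin k) ℂ)
    (hint : a₁ * a₂ - a₂ * a₁ + b * c = 0)
    (hnd : ∀ x : ℂ × ℂ × ℂ, x ≠ 0 →
      Function.Injective (monadA a₁ a₂ c x).mulVec ∧
      Function.Surjective (monadB a₁ a₂ b x).mulVec)
    (hb₀c₀ : b₀ * c₀ = 0)
    (hc₀ : Function.Injective c₀.mulVec)
    (hb₀ : Function.Surjective b₀.mulVec)
    (t : ℝ) (ht0 : 0 ≤ t) (ht1 : t ≤ 1) :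
    ((((1 - t : ℝ) : ℂ) • a₁) * (((1 - t : ℝ) : ℂ) • a₂) -
        (((1 - t : ℝ) : ℂ) • a₂) * (((1 - t : ℝ) : ℂ) • a₁) +
        Matrix.fromCols ((t : ℂ) • b₀) (((1 - t : ℝ) : ℂ) • b) *
          Matrix.fromRows ((t : ℂ) • c₀) (((1 - t : ℝ) : ℂ) • c) = 0) ∧
    (∀ x : ℂ × ℂ × ℂ, x ≠ 0 →
      Function.Injective
        (monadA (((1 - t : ℝ) : ℂ) • a₁) (((1 - t : ℝ) : ℂ) • a₂)
          (Matrix.fromRows ((t : ℂ) • c₀) (((1 - t : ℝ) : ℂ) • c)) x).mulVec ∧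
      Function.Surjective
        (monadB (((1 - t : ℝ) : ℂ) • a₁) (((1 - t : ℝ) : ℂ) • a₂)
          (Matrix.fromCols ((t : ℂ) • b₀) (((1 - t : ℝ) : ℂ) • b)) x).mulVec) := by
  have hst : ((1 - t : ℝ) : ℂ) ≠ 0 ∨ (t : ℂ) ≠ 0 := by
    norm_cast
    grind
  exact stabilization_homotopy_stays_in_configurations_general hint hnd hb₀c₀ hc₀ hb₀ hst
end

section
/- The rank-inclusion of SU configuration spaces on S⁴ is null-homotopic: let 𝒜(n) denote the space of integrable nondegenerate SU(n) S⁴-configurations of charge k, topologized as a subspace of M_{k×k}(ℂ)² × M_{k×n}(ℂ) × M_{n×k}(ℂ). Then the continuous inclusion ι : 𝒜(n) → 𝒜(2k+n), ι(a₁,a₂,b,c) = (a₁, a₂, (0 | b), (0 ; c)) (padding b on the left by a zero k×2k block and c on the top by a zero 2k×k block), is homotopic to a constant map. -/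
open Matrix

/-- The predicate that `(a₁, a₂, b, c)` is an integrable nondegenerate
`S⁴`-configuration. -/
def IsS4Config {k : ℕ} {N : Type} [Fintype N]
    (cfg : Matrix (Fin k) (Fin k) ℂ × Matrix (Fin k) (Fin k) ℂ ×
      Matrix (Fin k) N ℂ × Matrix N (Fin k) ℂ) : Prop :=
  cfg.1 * cfg.2.1 - cfg.2.1 * cfg.1 + cfg.2.2.1 * cfg.2.2.2 = 0 ∧
  ∀ x : ℂ × ℂ × ℂ, x ≠ 0 →
    Function.Injective (monadA cfg.1 cfg.2.1 cfg.2.2.2 x).mulVec ∧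
    Function.Surjective (monadB cfg.1 cfg.2.1 cfg.2.2.1 x).mulVec

/-!
Choose constant blocks `B` of size `k × 2k` and `C` of size `2k × k` such that `B` is surjective,
`C` is injective and `B * C = 0`, so that putting `tB` and `tC` into the slots freed by the
rank-inclusion adds nothing to `[a₁, a₂] + b * c`. Scaling the original configuration by `1 - t`
at the same time multiplies this expression by `(1 - t)²`, so integrability persists. Injectivity
of `c` together with surjectivity of `b` forces nondegeneracy, and for `t ≠ 0` the blocks `tC` and
`tB` supply both; at `t = 0` the padding changes neither monad map up to zero rows and columns.
At `t = 1` nothing of the original configuration is left.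
-/

section MulVec

variable {l m n o p R G : Type*}

theorem mulVec_injective_of_submatrix [NonUnitalNonAssocSemiring R] [Fintype n]
    {M : Matrix m n R} (r : l → m) (h : Function.Injective (M.submatrix r id).mulVec) :
    Function.Injective M.mulVec :=
  Function.Injective.of_comp (f := (· ∘ r)) h

theorem mulVec_surjective_of_submatrix [Semiring R] [Fintype n] [Fintype o]
    {M : Matrix m n R} (r : o → n) (h : Function.Surjective (M.submatrix id r).mulVec) :
    Function.Surjective M.mulVec := by
  classical
  have hM : M.submatrix id r = M * (1 : Matrix n n R).submatrix id r :=
    (mul_submatrix_one (Equiv.refl n) r M).symm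
  intro v
  obtain ⟨w, rfl⟩ := h v
  exact ⟨(1 : Matrix n n R).submatrix id r *ᵥ w, by rw [mulVec_mulVec, hM]⟩

theorem fromRows_mulVec_injective_of_left [NonUnitalNonAssocSemiring R] [Fintype n]
    {A : Matrix l n R} {B : Matrix m n R} (hA : Function.Injective A.mulVec) :
    Function.Injective (fromRows A B).mulVec :=
  mulVec_injective_of_submatrix Sum.inl hA

theorem fromRows_mulVec_injective_of_right [NonUnitalNonAssocSemiring R] [Fintype n]
    {A : Matrix l n R} {B : Matrix m n R} (hB : Function.Injective B.mulVec) :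
    Function.Injective (fromRows A B).mulVec :=
  mulVec_injective_of_submatrix Sum.inr hB

theorem fromCols_mulVec_surjective_of_left [Semiring R] [Fintype n] [Fintype o]
    {A : Matrix m n R} {B : Matrix m o R} (hA : Function.Surjective A.mulVec) :
    Function.Surjective (fromCols A B).mulVec :=
  mulVec_surjective_of_submatrix Sum.inl hA

theorem fromCols_mulVec_surjective_of_right [Semiring R] [Fintype n] [Fintype o]
    {A : Matrix m n R} {B : Matrix m o R} (hB : Function.Surjective B.mulVec) :
    Function.Surjective (fromCols A B).mulVec :=
  mulVec_surjective_of_submatrix Sum.inr hB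

section Scalar

variable [GroupWithZero G] [NonUnitalNonAssocSemiring R] [DistribMulAction G R]
  [IsScalarTower G R R] [Fintype n] {s : G} {M : Matrix m n R}

theorem smul_mulVec_injective (hs : s ≠ 0) (hM : Function.Injective M.mulVec) :
    Function.Injective (s • M).mulVec := fun v w h =>
  hM (MulAction.injective₀ hs (by simpa only [smul_mulVec] using h))

theorem smul_mulVec_surjective (hs : s ≠ 0) (hM : Function.Surjective M.mulVec) :
    Function.Surjective (s • M).mulVec := fun v => by
  obtain ⟨w, hw⟩ := hM (s⁻¹ • v)
  exact ⟨w, by rw [smul_mulVec, hw, smul_inv_smul₀ hs]⟩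

end Scalar

theorem one_mulVec_bijective [NonAssocSemiring R] [Fintype n] [DecidableEq n] :
    Function.Bijective (1 : Matrix n n R).mulVec := by
  rw [show (1 : Matrix n n R).mulVec = id from funext one_mulVec]
  exact Function.bijective_id

theorem exists_mulVec_surjective_injective_mul_eq_zero (R : Type*) [Semiring R]
    [Fintype l] [Fintype m] [Fintype p]
    (hcard : Fintype.card l + Fintype.card m ≤ Fintype.card p) :
    ∃ (B : Matrix l p R) (C : Matrix p m R),
      Function.Surjective B.mulVec ∧ Function.Injective C.mulVec ∧ B * C = 0 := by
  classical
  obtain ⟨f⟩ : Nonempty (l ⊕ m ↪ p) :=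
    Function.Embedding.nonempty_of_card_le (by rwa [Fintype.card_sum])
  let B : Matrix l p R := (1 : Matrix p p R).submatrix (f ∘ Sum.inl) id
  let C : Matrix p m R := (1 : Matrix p p R).submatrix id (f ∘ Sum.inr)
  have hB : B.submatrix id (f ∘ Sum.inl) = 1 :=
    submatrix_one _ (f.injective.comp Sum.inl_injective)
  have hC : C.submatrix (f ∘ Sum.inr) id = 1 :=
    submatrix_one _ (f.injective.comp Sum.inr_injective)
  refine ⟨B, C, mulVec_surjective_of_submatrix (f ∘ Sum.inl) ?_,
    mulVec_injective_of_submatrix (f ∘ Sum.inr) ?_, ?_⟩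
  · exact hB ▸ one_mulVec_bijective.surjective
  · exact hC ▸ one_mulVec_bijective.injective
  · rw [← submatrix_mul _ _ _ id _ Function.bijective_id, Matrix.one_mul]
    ext i j
    exact one_apply_ne (f.injective.ne Sum.inl_ne_inr)

end MulVec

section Continuity

variable {X R l m n : Type*} [TopologicalSpace X] [TopologicalSpace R]

theorem continuous_fromCols {A : X → Matrix l m R} {B : X → Matrix l n R}
    (hA : Continuous A) (hB : Continuous B) : Continuous fun x => fromCols (A x) (B x) :=
  continuous_matrix fun i j => by
    cases j with
    | inl j => exact hA.matrix_elem i j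
    | inr j => exact hB.matrix_elem i j

theorem continuous_fromRows {A : X → Matrix l n R} {B : X → Matrix m n R}
    (hA : Continuous A) (hB : Continuous B) : Continuous fun x => fromRows (A x) (B x) :=
  continuous_matrix fun i j => by
    cases i with
    | inl i => exact hA.matrix_elem i j
    | inr i => exact hB.matrix_elem i j

end Continuity

section Monad

variable {k : ℕ} {N P : Type} [Fintype N] [Fintype P]
  {a₁ a₂ : Matrix (Fin k) (Fin k) ℂ} {b : Matrix (Fin k) N ℂ} {c : Matrix N (Fin k) ℂ}
  {x : ℂ × ℂ × ℂ}

theorem monadA_mulVec_injective (hc : Function.Injective c.mulVec) (hx : x ≠ 0) :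
    Function.Injective (monadA a₁ a₂ c x).mulVec := by
  obtain ⟨x₁, x₂, x₃⟩ := x
  have h_one {s : ℂ} (hs : s ≠ 0) :
      Function.Injective (s • (1 : Matrix (Fin k) (Fin k) ℂ)).mulVec :=
    smul_mulVec_injective hs one_mulVec_bijective.injective
  rcases ne_or_eq x₃ 0 with h₃ | rfl
  · exact fromRows_mulVec_injective_of_right (smul_mulVec_injective h₃ hc)
  apply fromRows_mulVec_injective_of_left
  simp only [zero_smul, sub_zero]
  rcases ne_or_eq x₁ 0 with h₁ | rfl
  · exact fromRows_mulVec_injective_of_left (h_one h₁)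
  · exact fromRows_mulVec_injective_of_right (h_one (by rintro rfl; exact hx rfl))

theorem monadB_mulVec_surjective (hb : Function.Surjective b.mulVec) (hx : x ≠ 0) :
    Function.Surjective (monadB a₁ a₂ b x).mulVec := by
  obtain ⟨x₁, x₂, x₃⟩ := x
  have h_one {s : ℂ} (hs : s ≠ 0) :
      Function.Surjective (s • (1 : Matrix (Fin k) (Fin k) ℂ)).mulVec :=
    smul_mulVec_surjective hs one_mulVec_bijective.surjective
  rcases ne_or_eq x₃ 0 with h₃ | rfl
  · exact fromCols_mulVec_surjective_of_right (smul_mulVec_surjective h₃ hb)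
  apply fromCols_mulVec_surjective_of_left
  simp only [zero_smul, sub_zero, add_zero, ← neg_smul]
  rcases ne_or_eq x₁ 0 with h₁ | rfl
  · exact fromCols_mulVec_surjective_of_right (h_one h₁)
  · exact fromCols_mulVec_surjective_of_left
      (h_one (neg_ne_zero.mpr (by rintro rfl; exact hx rfl)))

theorem monadA_fromRows_zero_mulVec_injective
    (h : Function.Injective (monadA a₁ a₂ c x).mulVec) :
    Function.Injective (monadA a₁ a₂ (fromRows (0 : Matrix P (Fin k) ℂ) c) x).mulVec := by
  have h_sub : (monadA a₁ a₂ (fromRows (0 : Matrix P (Fin k) ℂ) c) x).submatrix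
      (Sum.map id Sum.inr) id = monadA a₁ a₂ c x := by
    ext (i | i) j <;> rfl
  exact mulVec_injective_of_submatrix (Sum.map id Sum.inr) (h_sub ▸ h)

theorem monadB_fromCols_zero_mulVec_surjective
    (h : Function.Surjective (monadB a₁ a₂ b x).mulVec) :
    Function.Surjective (monadB a₁ a₂ (fromCols (0 : Matrix (Fin k) P ℂ) b) x).mulVec := by
  have h_sub : (monadB a₁ a₂ (fromCols (0 : Matrix (Fin k) P ℂ) b) x).submatrix
      id (Sum.map id Sum.inr) = monadB a₁ a₂ b x := by
    ext i (j | j) <;> rfl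
  exact mulVec_surjective_of_submatrix (Sum.map id Sum.inr) (h_sub ▸ h)

end Monad

/-- Quadruples `(a₁, a₂, b, c)` of matrices of the sizes occurring in an `S⁴`-configuration of
charge `k`, with the `ℂⁿ` factor indexed by `N`; neither integrability nor nondegeneracy is
imposed. -/
abbrev S4Quadruple (k : ℕ) (N : Type) : Type :=
  Matrix (Fin k) (Fin k) ℂ × Matrix (Fin k) (Fin k) ℂ × Matrix (Fin k) N ℂ × Matrix N (Fin k) ℂ

/-- The space `𝒜(N)` of integrable nondegenerate `S⁴`-configurations of charge `k`, with the
subspace topology. -/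
abbrev S4ConfigSpace (k : ℕ) (N : Type) [Fintype N] : Type :=
  {cfg : S4Quadruple k N // IsS4Config cfg}

namespace S4Quadruple

variable {k : ℕ} {N P : Type}

/-- The integrability expression `[a₁, a₂] + bc` of a quadruple, which vanishes exactly when the
quadruple is integrable. -/
def curvature [Fintype N] (cfg : S4Quadruple k N) : Matrix (Fin k) (Fin k) ℂ :=
  cfg.1 * cfg.2.1 - cfg.2.1 * cfg.1 + cfg.2.2.1 * cfg.2.2.2

/-- The padding `(a₁, a₂, b, c) ↦ (a₁, a₂, (0 | b), (0 ; c))`, which underlies the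
rank-inclusion. -/
def pad (P : Type) (cfg : S4Quadruple k N) : S4Quadruple k (P ⊕ N) :=
  (cfg.1, cfg.2.1, fromCols 0 cfg.2.2.1, fromRows 0 cfg.2.2.2)

/-- The path `t ↦ ((1 - t)a₁, (1 - t)a₂, (tB | (1 - t)b), (tC ; (1 - t)c))` from the padding of
`(a₁, a₂, b, c)` to the constant quadruple `(0, 0, (B | 0), (C ; 0))`, with `t` allowed to be
complex. -/
def contraction (B : Matrix (Fin k) P ℂ) (C : Matrix P (Fin k) ℂ) (t : ℂ)
    (cfg : S4Quadruple k N) : S4Quadruple k (P ⊕ N) :=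
  ((1 - t) • cfg.1, (1 - t) • cfg.2.1,
    fromCols (t • B) ((1 - t) • cfg.2.2.1), fromRows (t • C) ((1 - t) • cfg.2.2.2))

variable {B : Matrix (Fin k) P ℂ} {C : Matrix P (Fin k) ℂ} {t : ℂ}

theorem contraction_zero (cfg : S4Quadruple k N) : contraction B C 0 cfg = cfg.pad P := by
  simp [contraction, pad]

theorem contraction_one (cfg : S4Quadruple k N) :
    contraction B C 1 cfg = (0, 0, fromCols B 0, fromRows C 0) := by
  simp [contraction]

theorem continuous_contraction {X : Type*} [TopologicalSpace X] {s : X → ℂ}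
    {f : X → S4Quadruple k N} (hs : Continuous s) (hf : Continuous f) :
    Continuous fun x => contraction B C (s x) (f x) := by
  unfold contraction
  refine .prodMk (by fun_prop) (.prodMk (by fun_prop) (.prodMk ?_ ?_))
  · exact continuous_fromCols (by fun_prop) (by fun_prop)
  · exact continuous_fromRows (by fun_prop) (by fun_prop)

variable [Fintype N] [Fintype P]

theorem curvature_pad (cfg : S4Quadruple k N) : (cfg.pad P).curvature = cfg.curvature := by
  simp [curvature, pad, fromCols_mul_fromRows]

theorem curvature_contraction (hBC : B * C = 0) (cfg : S4Quadruple k N) :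
    (contraction B C t cfg).curvature = (1 - t) ^ 2 • cfg.curvature := by
  simp only [curvature, contraction, fromCols_mul_fromRows, Matrix.smul_mul, Matrix.mul_smul, hBC,
    smul_zero, zero_add, smul_smul, sq, smul_sub, smul_add]

end S4Quadruple

namespace IsS4Config

open S4Quadruple

variable {k : ℕ} {N P : Type} [Fintype N] [Fintype P] {cfg : S4Quadruple k N}
  {B : Matrix (Fin k) P ℂ} {C : Matrix P (Fin k) ℂ} {t : ℂ}

theorem of_surjective_of_injective (hcfg : cfg.curvature = 0)
    (hb : Function.Surjective cfg.2.2.1.mulVec) (hc : Function.Injective cfg.2.2.2.mulVec) :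
    IsS4Config cfg :=
  ⟨hcfg, fun _ hx => ⟨monadA_mulVec_injective hc hx, monadB_mulVec_surjective hb hx⟩⟩

theorem pad (hcfg : IsS4Config cfg) : IsS4Config (cfg.pad P) :=
  ⟨(curvature_pad cfg).trans hcfg.1, fun x hx =>
    ⟨monadA_fromRows_zero_mulVec_injective (hcfg.2 x hx).1,
      monadB_fromCols_zero_mulVec_surjective (hcfg.2 x hx).2⟩⟩

theorem contraction_of_ne_zero (hB : Function.Surjective B.mulVec)
    (hC : Function.Injective C.mulVec) (hBC : B * C = 0) (hcfg : cfg.curvature = 0) (ht : t ≠ 0) :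
    IsS4Config (contraction B C t cfg) := by
  refine of_surjective_of_injective ?_ ?_ ?_
  · rw [curvature_contraction hBC, hcfg, smul_zero]
  · exact fromCols_mulVec_surjective_of_left (smul_mulVec_surjective ht hB)
  · exact fromRows_mulVec_injective_of_left (smul_mulVec_injective ht hC)

theorem contraction (hB : Function.Surjective B.mulVec) (hC : Function.Injective C.mulVec)
    (hBC : B * C = 0) (hcfg : IsS4Config cfg) : IsS4Config (contraction B C t cfg) := by
  rcases eq_or_ne t 0 with rfl | ht
  · exact contraction_zero cfg ▸ hcfg.pad
  · exact contraction_of_ne_zero hB hC hBC hcfg.1 ht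

theorem contraction_endpoint (hB : Function.Surjective B.mulVec) (hC : Function.Injective C.mulVec)
    (hBC : B * C = 0) :
    IsS4Config ((0, 0, fromCols B 0, fromRows C 0) : S4Quadruple k (P ⊕ N)) :=
  contraction_one (0 : S4Quadruple k N) ▸
    contraction_of_ne_zero hB hC hBC (by simp [curvature]) one_ne_zero

end IsS4Config

section RankInclusion

variable (k : ℕ) (N P : Type) [Fintype N] [Fintype P]

/-- The rank-inclusion `𝒜(N) → 𝒜(P ⊕ N)`, with the added coordinates indexed by `P`. -/
def rankInclusion : C(S4ConfigSpace k N, S4ConfigSpace k (P ⊕ N)) where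
  toFun cfg := ⟨cfg.val.pad P, cfg.property.pad⟩
  continuous_toFun := by
    refine Continuous.subtype_mk ?_ _
    simp only [← S4Quadruple.contraction_zero (B := 0) (C := 0)]
    exact S4Quadruple.continuous_contraction continuous_const continuous_subtype_val

theorem rank_inclusion_null_homotopic_S4_general (hP : 2 * k ≤ Fintype.card P) :
    (rankInclusion k N P).Nullhomotopic := by
  obtain ⟨B, C, hB, hC, hBC⟩ :=
    exists_mulVec_surjective_injective_mul_eq_zero (l := Fin k) (m := Fin k) (p := P) ℂ
      (by simpa [← two_mul] using hP)
  refine ⟨⟨_, .contraction_endpoint hB hC hBC⟩, ⟨{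
    toFun := fun z => ⟨S4Quadruple.contraction B C (z.1 : ℝ) z.2.val, .contraction hB hC hBC z.2.2⟩
    continuous_toFun :=
      (S4Quadruple.continuous_contraction (by fun_prop) (by fun_prop)).subtype_mk _
    map_zero_left := fun cfg => Subtype.ext ?_
    map_one_left := fun cfg => Subtype.ext ?_ }⟩⟩
  · simpa [rankInclusion] using S4Quadruple.contraction_zero cfg.val
  · simpa using S4Quadruple.contraction_one cfg.val

end RankInclusion

/-- The rank-inclusion `ι : 𝒜(n) → 𝒜(2k+n)` of the spaces of integrable nondegenerate
`SU(n)` `S⁴`-configurations of charge `k`, `ι(a₁,a₂,b,c) = (a₁, a₂, (0 | b), (0 ; c))`,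
is homotopic to a constant map: there is a continuous homotopy `H` with `H(0,·) = ι` and
`H(1,·)` constant. -/
theorem rank_inclusion_null_homotopic_S4 {k n : ℕ} (hk : 1 ≤ k) :
    ∃ H : unitInterval ×
        {cfg : Matrix (Fin k) (Fin k) ℂ × Matrix (Fin k) (Fin k) ℂ ×
          Matrix (Fin k) (Fin n) ℂ × Matrix (Fin n) (Fin k) ℂ // IsS4Config cfg} →
        {cfg : Matrix (Fin k) (Fin k) ℂ × Matrix (Fin k) (Fin k) ℂ ×
          Matrix (Fin k) (Fin (2 * k) ⊕ Fin n) ℂ ×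
          Matrix (Fin (2 * k) ⊕ Fin n) (Fin k) ℂ // IsS4Config cfg},
      Continuous H ∧
      (∀ a, (H (0, a)).val =
        (a.val.1, a.val.2.1,
          Matrix.fromCols (0 : Matrix (Fin k) (Fin (2 * k)) ℂ) a.val.2.2.1,
          Matrix.fromRows (0 : Matrix (Fin (2 * k)) (Fin k) ℂ) a.val.2.2.2)) ∧
      (∃ c₀, ∀ a, H (1, a) = c₀) := by
  obtain ⟨c₀, ⟨H⟩⟩ :=
    rank_inclusion_null_homotopic_S4_general k (Fin n) (Fin (2 * k)) (Fintype.card_fin _).ge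
  exact ⟨H, H.continuous, fun a => congrArg Subtype.val (H.apply_zero a), c₀, H.apply_one⟩
end
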